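/- arXiv:1904.09420 — 3 statements merged into one kernel-verified Lean document; each statement's English description precedes it below -/
import Mathlib

section
/- Let M be a p×p real symmetric matrix. Then the pseudo nullity of M satisfies d(M) = d₀(M) + min(d₊(M), d₋(M)), where d₀(M), d₊(M), d₋(M) denote the numbers of zero, positive and negative eigenvalues of M (counted with multiplicity). -/
/-!
After an orthogonal change of basis, `M` may be taken to be the diagonal matrix of its eigenvalues
`l`; then `C` is a matrix with orthonormal columns whose column space is totally isotropic for the
form `∑ i, l i * y i ^ 2`.

Upper bound (`card_le_of_isotropic`): if `l` is strictly negative off a set `S`, an isotropic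
vector that vanishes on `S` is zero, so restricting coordinates to `S` is injective on the column
space and its dimension is at most `#S`. This is applied with `S = {0 ≤ l}` for `l`, and with
`S = {l ≤ 0}` for `-l`.

Attainment (`exists_isotropic`): the coordinate vectors with `l i = 0`, together with one unit
isotropic vector in the plane of each pair of a positive and a negative coordinate, form an
orthonormal family spanning a totally isotropic subspace.
-/

open Matrix

/-- On the columns of an isotropic `C`, the coordinates in `{i | 0 ≤ l i}` determine everything,
because the form is negative definite on the remaining coordinates. -/
lemma card_le_of_isotropic {p d : ℕ} (l : Fin p → ℝ) (C : Matrix (Fin p) (Fin d) ℝ)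
    (h1 : Cᵀ * C = 1) (h2 : Cᵀ * diagonal l * C = 0) :
    d ≤ Nat.card {i : Fin p // 0 ≤ l i} := by
  classical
  let A : Matrix {i : Fin p // 0 ≤ l i} (Fin d) ℝ := C.submatrix Subtype.val id
  have hinj : Function.Injective (Matrix.toLin' A) := by
    rw [← LinearMap.ker_eq_bot, LinearMap.ker_eq_bot']
    intro x hx
    have hS : ∀ i, 0 ≤ l i → (C *ᵥ x) i = 0 := fun i hi => by
      have := congrFun hx ⟨i, hi⟩
      simpa [A, mulVec, dotProduct] using this
    have hq : ∑ i, l i * (C *ᵥ x) i ^ 2 = 0 := by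
      have h3 : x ⬝ᵥ ((Cᵀ * diagonal l * C) *ᵥ x) = 0 := by simp [h2]
      rw [← mulVec_mulVec, ← mulVec_mulVec, dotProduct_mulVec, vecMul_transpose] at h3
      rw [← h3, dotProduct]
      refine Finset.sum_congr rfl fun i _ => ?_
      rw [mulVec_diagonal]
      ring
    have hle : ∀ i ∈ Finset.univ, l i * (C *ᵥ x) i ^ 2 ≤ 0 := fun i _ => by
      rcases le_or_gt 0 (l i) with h | h
      · simp [hS i h]
      · exact mul_nonpos_of_nonpos_of_nonneg h.le (sq_nonneg _)
    have hz := (Finset.sum_eq_zero_iff_of_nonpos hle).1 hq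
    have hy : C *ᵥ x = 0 := by
      ext i
      rcases le_or_gt 0 (l i) with h | h
      · exact hS i h
      · simpa [h.ne] using hz i (Finset.mem_univ i)
    calc x = (Cᵀ * C) *ᵥ x := by simp [h1]
      _ = 0 := by rw [← mulVec_mulVec, hy, mulVec_zero]
  simpa using LinearMap.finrank_le_finrank_of_injective hinj

/-- The column family consists of the coordinate vectors of the kernel and of the vectors
`a j • e (f j) + b j • e (g j)`, where `a j ^ 2 + b j ^ 2 = 1` and
`l (f j) * a j ^ 2 + l (g j) * b j ^ 2 = 0`. -/
lemma exists_isotropic {p k : ℕ} (l : Fin p → ℝ)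
    (hp : k ≤ Nat.card {i : Fin p // 0 < l i}) (hn : k ≤ Nat.card {i : Fin p // l i < 0}) :
    ∃ C : Matrix (Fin p) (Fin (Nat.card {i : Fin p // l i = 0} + k)) ℝ,
      Cᵀ * C = 1 ∧ Cᵀ * diagonal l * C = 0 := by
  classical
  obtain ⟨f⟩ : Nonempty (Fin k ↪ {i : Fin p // 0 < l i}) :=
    Function.Embedding.nonempty_of_card_le (by simpa using hp)
  obtain ⟨g⟩ : Nonempty (Fin k ↪ {i : Fin p // l i < 0}) :=
    Function.Embedding.nonempty_of_card_le (by simpa using hn)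
  have hab : ∀ j, ∃ a b : ℝ, a * a + b * b = 1 ∧ a * (l (f j) * a) + b * (l (g j) * b) = 0 := by
    intro j
    have h1 := (f j).2
    have h2 := (g j).2
    have h3 : 0 < l (f j) - l (g j) := by linarith
    have ea := Real.mul_self_sqrt (show 0 ≤ -l (g j) / (l (f j) - l (g j)) from
      div_nonneg (by linarith) h3.le)
    have eb := Real.mul_self_sqrt (show 0 ≤ l (f j) / (l (f j) - l (g j)) from
      div_nonneg h1.le h3.le)
    refine ⟨√(-l (g j) / (l (f j) - l (g j))), √(l (f j) / (l (f j) - l (g j))), ?_, ?_⟩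
    · rw [ea, eb]
      field_simp
      ring
    · rw [mul_left_comm, mul_left_comm (√(l (f j) / _)), ea, eb]
      field_simp
      ring
  choose a b h1 h2 using hab
  obtain ⟨B, Bl, Br⟩ : ∃ B : Matrix (Fin p) ({i : Fin p // l i = 0} ⊕ Fin k) ℝ,
      (∀ i z, B i (Sum.inl z) = if i = z.1 then 1 else 0) ∧
      ∀ i j, B i (Sum.inr j) =
        (if i = (f j).1 then a j else 0) + (if i = (g j).1 then b j else 0) :=
    ⟨of fun i => Sum.elim (fun z => if i = z.1 then 1 else 0)
      fun j => (if i = (f j).1 then a j else 0) + (if i = (g j).1 then b j else 0),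
      fun _ _ => rfl, fun _ _ => rfl⟩
  have zf : ∀ (z : {i : Fin p // l i = 0}) j, z.1 ≠ (f j).1 := fun z j h => by
    have := (f j).2; rw [← h, z.2] at this; exact lt_irrefl _ this
  have zg : ∀ (z : {i : Fin p // l i = 0}) j, z.1 ≠ (g j).1 := fun z j h => by
    have := (g j).2; rw [← h, z.2] at this; exact lt_irrefl _ this
  have fg : ∀ i j, (f i).1 ≠ (g j).1 := fun i j h => by
    have := (f i).2; rw [h] at this; exact lt_asymm this (g j).2
  have ff : ∀ i j, (f i).1 = (f j).1 ↔ i = j := fun i j => by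
    rw [Subtype.val_inj, f.injective.eq_iff]
  have gg : ∀ i j, (g i).1 = (g j).1 ↔ i = j := fun i j => by
    rw [Subtype.val_inj, g.injective.eq_iff]
  have B1 : Bᵀ * B = 1 := by
    ext c c'
    rw [mul_apply]
    rcases c with z | j <;> rcases c' with z' | j'
    · simp [Bl, one_apply, Subtype.val_inj, eq_comm]
    · simp [Bl, Br, zf, zg]
    · simp [Bl, Br, zf, zg]
    · simp only [transpose_apply, Br, add_mul, Finset.sum_add_distrib, ite_mul, zero_mul,
        Finset.sum_ite_eq', Finset.mem_univ, if_true, ff, gg, fg,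
        fun i j => (fg i j).symm, if_false, add_zero, zero_add, one_apply, Sum.inr.injEq]
      split_ifs with h
      · subst h; exact h1 j
      · simp
  have B2 : Bᵀ * diagonal l * B = 0 := by
    ext c c'
    rw [Matrix.mul_assoc, mul_apply]
    rcases c with z | j <;> rcases c' with z' | j'
    · simp [Bl, diagonal_mul, z'.2]
    · simp [Bl, diagonal_mul, z.2]
    · simp [Bl, diagonal_mul, z'.2]
    · simp only [transpose_apply, diagonal_mul, Br, add_mul, Finset.sum_add_distrib, ite_mul,
        zero_mul, Finset.sum_ite_eq', Finset.mem_univ, if_true, ff, gg, fg,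
        fun i j => (fg i j).symm, if_false, add_zero, zero_add, Matrix.zero_apply]
      split_ifs with h
      · subst h; exact h2 j
      · simp
  let e : Fin (Nat.card {i : Fin p // l i = 0} + k) ≃ {i : Fin p // l i = 0} ⊕ Fin k :=
    Fintype.equivOfCardEq (by simp)
  refine ⟨B.submatrix id e, ?_, ?_⟩
  · calc (B.submatrix id e)ᵀ * B.submatrix id e = (Bᵀ * B).submatrix e e := rfl
      _ = 1 := by rw [B1, submatrix_one_equiv]
  · calc (B.submatrix id e)ᵀ * diagonal l * B.submatrix id e
        = (Bᵀ * diagonal l * B).submatrix e e := rfl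
      _ = 0 := by rw [B2, submatrix_zero]; rfl

/-- Proposition 3.1: the pseudo nullity of a real symmetric matrix `M`, i.e. the largest
`d₁` such that there is a `p × d₁` matrix `C` with `CᵀC = I` and `CᵀMC = 0`, equals
`d₀(M) + min(d₊(M), d₋(M))`, the counts of zero, positive and negative eigenvalues. -/
theorem pseudo_nullity_eq_d0_add_min {p : ℕ} (M : Matrix (Fin p) (Fin p) ℝ)
    (hM : M.IsHermitian) :
    IsGreatest
      {d₁ : ℕ | ∃ C : Matrix (Fin p) (Fin d₁) ℝ, Cᵀ * C = 1 ∧ Cᵀ * M * C = 0}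
      (Nat.card {i : Fin p // hM.eigenvalues i = 0} +
        min (Nat.card {i : Fin p // 0 < hM.eigenvalues i})
            (Nat.card {i : Fin p // hM.eigenvalues i < 0})) := by
  classical
  obtain ⟨U, hU1, hU2, hD⟩ : ∃ U : Matrix (Fin p) (Fin p) ℝ, Uᵀ * U = 1 ∧ U * Uᵀ = 1 ∧
      M = U * diagonal hM.eigenvalues * Uᵀ := by
    refine ⟨hM.eigenvectorUnitary, ?_, ?_, ?_⟩
    · simpa [star_eq_conjTranspose] using Unitary.coe_star_mul_self hM.eigenvectorUnitary
    · simpa [star_eq_conjTranspose] using Unitary.coe_mul_star_self hM.eigenvectorUnitary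
    · have := hM.spectral_theorem
      rw [Unitary.conjStarAlgAut_apply] at this
      simpa [star_eq_conjTranspose, Function.comp_def] using this
  generalize hM.eigenvalues = l at *
  constructor
  · obtain ⟨C, h1, h2⟩ := exists_isotropic l (min_le_left _ _) (min_le_right _ _)
    refine ⟨U * C, ?_, ?_⟩
    · rw [transpose_mul, Matrix.mul_assoc, ← Matrix.mul_assoc Uᵀ, hU1, Matrix.one_mul, h1]
    · calc (U * C)ᵀ * M * (U * C)
          = Cᵀ * (Uᵀ * U) * diagonal l * (Uᵀ * U) * C := by
            rw [hD, transpose_mul]; simp only [Matrix.mul_assoc]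
        _ = 0 := by rw [hU1, Matrix.mul_one, Matrix.mul_one, h2]
  · rintro d ⟨C, h1, h2⟩
    have k1 : (Uᵀ * C)ᵀ * (Uᵀ * C) = 1 := by
      rw [transpose_mul, transpose_transpose, Matrix.mul_assoc, ← Matrix.mul_assoc U, hU2,
        Matrix.one_mul, h1]
    have k2 : (Uᵀ * C)ᵀ * diagonal l * (Uᵀ * C) = 0 := by
      rw [← h2, hD, transpose_mul, transpose_transpose]; simp only [Matrix.mul_assoc]
    have k3 : (Uᵀ * C)ᵀ * diagonal (-l) * (Uᵀ * C) = 0 := by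
      have : diagonal (-l) = -diagonal l := (diagonal_neg l).symm
      rw [this, Matrix.mul_neg, Matrix.neg_mul, k2, neg_zero]
    have b1 := card_le_of_isotropic l _ k1 k2
    have b2 := card_le_of_isotropic (-l) _ k1 k3
    have c1 : Nat.card {i // 0 ≤ l i} ≤ Nat.card {i // l i = 0} + Nat.card {i // 0 < l i} := by
      simp only [Nat.card_eq_fintype_card]
      refine le_trans (Fintype.card_subtype_mono _ _ ?_) (Fintype.card_subtype_or _ _)
      intro i hi
      exact hi.eq_or_lt.imp Eq.symm id
    have c2 : Nat.card {i // 0 ≤ (-l) i} ≤ Nat.card {i // l i = 0} + Nat.card {i // l i < 0} := by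
      simp only [Nat.card_eq_fintype_card]
      refine le_trans (Fintype.card_subtype_mono _ _ ?_) (Fintype.card_subtype_or _ _)
      intro i hi
      exact (neg_nonneg.1 hi).eq_or_lt
    omega
end

section
/- Let M be a p×p real symmetric matrix and let C₁ be a p×d₁ real matrix with C₁ᵀC₁ = I_{d₁} and C₁ᵀMC₁ = 0. Then d₁ ≤ d₀(M) + min(d₊(M), d₋(M)). -/
/-!
Let `M = U D Uᵀ` be the spectral decomposition and `B = Uᵀ C`, so that `BᵀB = 1` and `BᵀDB = 0`.
For `y = B v` this reads `∑ i, λ i * y i ^ 2 = 0`. If `y` vanishes at all indices with `λ i ≤ 0`,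
this is a sum of nonnegative terms, so `y = 0` and hence `v = 0`. Therefore `v ↦ B v`, restricted
to the coordinates with `λ i ≤ 0`, is injective, which gives `d₁ ≤ d₀ + d₋`
(`le_card_nonpos_of_isotropic`). Applying this to `-λ` gives `d₁ ≤ d₀ + d₊`.
-/

open Matrix

/-- An injectively parametrised subspace on which the diagonal form `∑ i, l i * y i ^ 2` vanishes
has dimension at most the number of nonpositive coefficients: it meets the coordinate subspace
of the positive coefficients, on which the form is definite, trivially. -/
theorem le_card_nonpos_of_isotropic {p d : ℕ} (l : Fin p → ℝ)
    (B : Matrix (Fin p) (Fin d) ℝ) (hB : Bᵀ * B = 1) (hl : Bᵀ * diagonal l * B = 0) :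
    d ≤ Nat.card {i : Fin p // l i = 0} + Nat.card {i : Fin p // l i < 0} := by
  have hinj : Function.Injective
      ((LinearMap.funLeft ℝ ℝ (Subtype.val : {i : Fin p // l i ≤ 0} → Fin p)) ∘ₗ
        B.mulVecLin) := by
    rw [← LinearMap.ker_eq_bot, LinearMap.ker_eq_bot']
    intro v hv
    have hz : ∀ i, l i ≤ 0 → (B *ᵥ v) i = 0 := fun i hi => congrFun hv ⟨i, hi⟩
    have hs : ∑ i, l i * (B *ᵥ v) i ^ 2 = 0 := by
      have h : v ⬝ᵥ ((Bᵀ * diagonal l * B) *ᵥ v) = 0 := by simp [hl]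
      rw [← mulVec_mulVec, ← mulVec_mulVec, dotProduct_mulVec, vecMul_transpose] at h
      rw [← h, dotProduct]
      refine Finset.sum_congr rfl fun i _ => ?_
      rw [mulVec_diagonal]
      ring
    have hnn : ∀ i ∈ Finset.univ, 0 ≤ l i * (B *ᵥ v) i ^ 2 := by
      intro i _
      rcases le_or_gt (l i) 0 with hi | hi
      · simp [hz i hi]
      · positivity
    have hBv : B *ᵥ v = 0 := by
      ext i
      rcases le_or_gt (l i) 0 with hi | hi
      · exact hz i hi
      · have := (Finset.sum_eq_zero_iff_of_nonneg hnn).1 hs i (Finset.mem_univ i)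
        simpa [hi.ne'] using this
    calc v = (Bᵀ * B) *ᵥ v := by rw [hB, one_mulVec]
      _ = 0 := by rw [← mulVec_mulVec, hBv, mulVec_zero]
  have hd := LinearMap.finrank_le_finrank_of_injective hinj
  simp only [Module.finrank_fintype_fun_eq_card, Fintype.card_fin] at hd
  refine hd.trans ?_
  simp only [Nat.card_eq_fintype_card]
  rw [← Fintype.card_subtype_or_disjoint]
  · exact Fintype.card_subtype_mono _ _ fun i hi => hi.eq_or_lt
  · rw [Pi.disjoint_iff]
    intro i
    simp only [Prop.disjoint_iff, not_and]
    exact fun h => by simp [h]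

/-- Upper-bound half of Proposition 3.1: if `CᵀC = I_{d₁}` and `CᵀMC = 0`, then
`d₁ ≤ d₀(M) + min(d₊(M), d₋(M))`. -/
theorem pseudo_nullity_le {p d₁ : ℕ} (M : Matrix (Fin p) (Fin p) ℝ)
    (hM : M.IsHermitian)
    (C : Matrix (Fin p) (Fin d₁) ℝ) (hC : Cᵀ * C = 1) (hCM : Cᵀ * M * C = 0) :
    d₁ ≤ Nat.card {i : Fin p // hM.eigenvalues i = 0} +
      min (Nat.card {i : Fin p // 0 < hM.eigenvalues i})
          (Nat.card {i : Fin p // hM.eigenvalues i < 0}) := by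
  obtain ⟨U, hU, hMU⟩ : ∃ U : Matrix (Fin p) (Fin p) ℝ, U * Uᵀ = 1 ∧
      M = U * diagonal hM.eigenvalues * Uᵀ := by
    refine ⟨hM.eigenvectorUnitary, ?_, ?_⟩
    · simpa [star_eq_conjTranspose] using Unitary.coe_mul_star_self hM.eigenvectorUnitary
    · have h := hM.spectral_theorem
      rw [Unitary.conjStarAlgAut_apply] at h
      simpa [star_eq_conjTranspose, Function.comp_def] using h
  have hB : (Uᵀ * C)ᵀ * (Uᵀ * C) = 1 := by
    rw [transpose_mul, transpose_transpose, Matrix.mul_assoc, ← Matrix.mul_assoc U, hU,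
      Matrix.one_mul, hC]
  have hl : (Uᵀ * C)ᵀ * diagonal hM.eigenvalues * (Uᵀ * C) = 0 := by
    rw [← hCM]
    conv_rhs => rw [hMU]
    simp only [transpose_mul, transpose_transpose, Matrix.mul_assoc]
  have hneg := le_card_nonpos_of_isotropic _ _ hB hl
  have hpos := le_card_nonpos_of_isotropic (fun i => -hM.eigenvalues i) _ hB (by
    rw [← diagonal_neg, Matrix.mul_neg, Matrix.neg_mul, hl, neg_zero])
  simp only [neg_eq_zero, neg_lt_zero] at hpos
  omega
end

section
/- There exists a 3×3 real symmetric matrix M with pseudo nullity d(M) = 1 and unit vectors w₁, w₂ ∈ ℝ³ such that w₁ᵀMw₁ = 0, w₂ᵀMw₂ = 0, the one-dimensional spans of w₁ and of w₂ are different, and w₁ᵀMw₂ ≠ 0. (For example M = diag(1,−1,1), w₁ = (0,1,1)/√2, w₂ = (1,1,0)/√2.) Consequently a pseudo null space of a symmetric matrix is not unique in general. -/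
open Matrix

/-!
Take `M = diag(1, -1, 1)`, `w₁ = (0, 1, 1)/√2`, `w₂ = (1, 1, 0)/√2`. The pseudo nullity of `M` is at
most `1`: if `CᵀC = 1` and `CᵀMC = 0`, then subtracting gives `2 rᵀr = 1` where `r` is the middle
row of `C`, and the rank-one matrix `rᵀr` cannot be a nonzero multiple of the identity in
dimension at least two.
-/

/-- Non-uniqueness of pseudo null spaces (Proposition 3.2, Example 3.1): there is a
`3×3` real symmetric matrix with pseudo nullity `1` admitting unit pseudo
eigenvectors `w₁, w₂` spanning different lines with `w₁ᵀMw₂ ≠ 0`. -/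
theorem pseudo_null_space_not_unique :
    ∃ M : Matrix (Fin 3) (Fin 3) ℝ, Mᵀ = M ∧
      IsGreatest
        {d₁ : ℕ | ∃ C : Matrix (Fin 3) (Fin d₁) ℝ, Cᵀ * C = 1 ∧ Cᵀ * M * C = 0} 1 ∧
      ∃ w₁ w₂ : Fin 3 → ℝ, w₁ ⬝ᵥ w₁ = 1 ∧ w₂ ⬝ᵥ w₂ = 1 ∧
        w₁ ⬝ᵥ (M *ᵥ w₁) = 0 ∧ w₂ ⬝ᵥ (M *ᵥ w₂) = 0 ∧
        Submodule.span ℝ {w₁} ≠ Submodule.span ℝ {w₂} ∧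
        w₁ ⬝ᵥ (M *ᵥ w₂) ≠ 0 := by
  -- `a` plays the role of `1/√2`; only `a * a = 1/2` is used.
  obtain ⟨a, ha⟩ : ∃ a : ℝ, a * a = 1 / 2 :=
    ⟨√(1 / 2), Real.mul_self_sqrt (by norm_num)⟩
  have ha0 : a ≠ 0 := by
    rintro rfl
    norm_num at ha
  refine ⟨diagonal ![1, -1, 1], diagonal_transpose _, ⟨⟨!![0; a; a], ?_, ?_⟩, ?_⟩,
    ![0, a, a], ![a, a, 0], ?_, ?_, ?_, ?_, ?_, ?_⟩
  · ext i j
    fin_cases i; fin_cases j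
    simp [Matrix.mul_apply, Fin.sum_univ_three]
    linarith
  · ext i j
    fin_cases i; fin_cases j
    simp [Matrix.mul_apply, Fin.sum_univ_three, diagonal_apply]
  · rintro d ⟨C, h1, h0⟩
    by_contra! hd
    have key (i j : Fin d) : 2 * (C 1 i * C 1 j) = (1 : Matrix (Fin d) (Fin d) ℝ) i j := by
      have e1 := congrFun (congrFun h1 i) j
      have e0 := congrFun (congrFun h0 i) j
      rw [Matrix.mul_apply] at e1 e0
      simp only [mul_diagonal, transpose_apply, Fin.sum_univ_three,
        Matrix.zero_apply, Matrix.cons_val] at e1 e0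
      linarith
    let i : Fin d := ⟨0, by omega⟩
    let j : Fin d := ⟨1, hd⟩
    have hij : i ≠ j := by simp [i, j]
    have hii := key i i
    have hjj := key j j
    have hoff := key i j
    rw [one_apply_eq] at hii hjj
    rw [one_apply_ne hij] at hoff
    rcases mul_eq_zero.mp (by linarith : C 1 i * C 1 j = 0) with h | h
    · simp [h] at hii
    · simp [h] at hjj
  · simp [dotProduct, Fin.sum_univ_three]
    linarith
  · simp [dotProduct, Fin.sum_univ_three]
    linarith
  · simp [dotProduct, mulVec_diagonal, Fin.sum_univ_three]
  · simp [dotProduct, mulVec_diagonal, Fin.sum_univ_three]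
  · intro h
    have hm : ![0, a, a] ∈ Submodule.span ℝ {![a, a, 0]} :=
      h ▸ Submodule.mem_span_singleton_self _
    obtain ⟨c, hc⟩ := Submodule.mem_span_singleton.mp hm
    -- The third coordinates are `c * 0` and `a`.
    have h2 := congrFun hc 2
    simp at h2
    exact ha0 h2.symm
  · simp [dotProduct, mulVec_diagonal, Fin.sum_univ_three, ha0]
end
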